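/- Let n ≥ 1 and let f : ℝ^n → ℝ be a smooth function with 0 < a ≤ f ≤ b for some constants a, b and with bounded gradient. Then for every t ≥ 0 and every x ∈ ℝ^n, N_t(f log f)(x) − N_t f(x) · log N_t f(x) ≤ ((1 − e^{−2t})/2) · N_t(|∇f|²/f)(x) (local logarithmic Sobolev inequality for the Ornstein–Uhlenbeck semigroup). -/

import Mathlib

open MeasureTheory Real

noncomputable def gaussianMeasure (n : ℕ) : Measure (EuclideanSpace ℝ (Fin n)) :=
  volume.withDensity fun x => ENNReal.ofReal ((2 * π) ^ (-(n : ℝ) / 2) * Real.exp (-‖x‖ ^ 2 / 2))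

/-- Ornstein-Uhlenbeck semigroup via the Mehler formula. -/
noncomputable def OU (n : ℕ) (t : ℝ) (f : EuclideanSpace ℝ (Fin n) → ℝ)
    (x : EuclideanSpace ℝ (Fin n)) : ℝ :=
  ∫ y, f (Real.exp (-t) • x + Real.sqrt (1 - Real.exp (-2 * t)) • y) ∂(gaussianMeasure n)

open ProbabilityTheory Filter Topology

theorem gaussianMeasure_eq_stdGaussian (n : ℕ) :
    gaussianMeasure n = stdGaussian (EuclideanSpace ℝ (Fin n)) := by
  have hint : Integrable (fun x : EuclideanSpace ℝ (Fin n) =>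
      (2 * π) ^ (-(n : ℝ) / 2) * Real.exp (-‖x‖ ^ 2 / 2)) := by
    refine Integrable.const_mul ?_ _
    have h := (GaussianFourier.integrable_cexp_neg_mul_sq_norm_add (b := (1 / 2 : ℂ))
      (by norm_num) 0 (0 : EuclideanSpace ℝ (Fin n))).norm
    refine h.congr (Eventually.of_forall fun x => ?_)
    simp [Complex.norm_exp, ← Complex.ofReal_pow]
    ring
  have : IsFiniteMeasure (gaussianMeasure n) :=
    isFiniteMeasure_withDensity_ofReal hint.hasFiniteIntegral
  refine Measure.ext_of_charFun ?_
  ext t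
  rw [charFun_stdGaussian, charFun_apply, gaussianMeasure,
    integral_withDensity_eq_integral_toReal_smul (by fun_prop) (by simp)]
  have h := GaussianFourier.integral_cexp_neg_mul_sq_norm_add (b := (1 / 2 : ℂ))
      (by norm_num) Complex.I t
  have hpos : (0 : ℝ) < (2 * π) ^ (-(n : ℝ) / 2) := by positivity
  calc _ = ∫ x : EuclideanSpace ℝ (Fin n), (((2 * π) ^ (-(n : ℝ) / 2) : ℝ) : ℂ) *
        Complex.exp (-(1 / 2) * ‖x‖ ^ 2 + Complex.I * inner ℝ t x) := by
        refine integral_congr_ae (Eventually.of_forall fun x => ?_)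
        simp only
        rw [ENNReal.toReal_ofReal (by positivity), Complex.real_smul, Complex.ofReal_mul, mul_assoc,
          Complex.ofReal_exp, ← Complex.exp_add, real_inner_comm]
        congr 2
        push_cast
        ring
    _ = _ := by
        rw [integral_const_mul, h]
        have h2 : ((π : ℂ) / (1 / 2)) = ((2 * π : ℝ) : ℂ) := by push_cast; ring
        have h3 : ((Module.finrank ℝ (EuclideanSpace ℝ (Fin n)) : ℂ) / 2) = ((n / 2 : ℝ) : ℂ) := by
          simp
        rw [h2, h3, ← Complex.ofReal_cpow (by positivity), ← mul_assoc, ← Complex.ofReal_mul,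
          ← Real.rpow_add (by positivity)]
        simp only [Complex.I_sq]
        rw [show -(n : ℝ) / 2 + n / 2 = 0 by ring]
        simp
        congr 1
        ring

/-- The Bregman divergence of `u ↦ u log u`. -/
noncomputable def logBregman (m u : ℝ) : ℝ := u * (log u - log m) - u + m

theorem logBregman_nonneg {m u : ℝ} (hm : 0 < m) (hu : 0 < u) : 0 ≤ logBregman m u := by
  have h := log_le_sub_one_of_pos (div_pos hm hu)
  rw [log_div hm.ne' hu.ne'] at h
  have h2 := mul_le_mul_of_nonneg_left h hu.le
  have h3 : u * (m / u - 1) = m - u := by field_simp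
  unfold logBregman
  linarith

theorem logBregman_le_sq_div {m u : ℝ} (hm : 0 < m) (hu : 0 < u) :
    logBregman m u ≤ (u - m) ^ 2 / m := by
  have h := log_le_sub_one_of_pos (div_pos hu hm)
  rw [log_div hu.ne' hm.ne'] at h
  have h2 := mul_le_mul_of_nonneg_left h hu.le
  have h3 : u * (u / m - 1) = (u - m) ^ 2 / m + u - m := by field_simp; ring
  unfold logBregman
  linarith

theorem one_add_mul_log_one_add_le {s : ℝ} (hs : -1 < s) :
    (1 + s) * log (1 + s) ≤ s + s ^ 2 / 2 + |s| ^ 3 / 2 := by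
  rcases le_total 0 s with h | h
  · have hmono : MonotoneOn (fun x : ℝ => x + x ^ 2 / 2 - (1 + x) * log (1 + x)) (Set.Ici 0) := by
      have hd (x : ℝ) (hx : 0 ≤ x) :
          HasDerivAt (fun x : ℝ => x + x ^ 2 / 2 - (1 + x) * log (1 + x)) (x - log (1 + x)) x := by
        have h1 : HasDerivAt (fun x : ℝ => 1 + x) 1 x := (hasDerivAt_id x).const_add 1
        have h2 := ((hasDerivAt_id x).add ((hasDerivAt_pow 2 x).div_const 2)).sub
          (h1.mul (h1.log (by positivity)))
        refine h2.congr_deriv ?_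
        have : 1 + x ≠ 0 := by positivity
        rw [mul_one_div_cancel this]
        push_cast
        ring
      refine monotoneOn_of_deriv_nonneg (convex_Ici 0)
        (fun x hx => (hd x hx).continuousAt.continuousWithinAt) ?_ ?_
      · exact fun x hx => (hd x (interior_subset hx)).differentiableAt.differentiableWithinAt
      · intro x hx
        have hx := interior_subset hx
        rw [(hd x hx).deriv]
        have := log_le_sub_one_of_pos (x := 1 + x) (by linarith [Set.mem_Ici.1 hx])
        linarith
    have := hmono (Set.mem_Ici.2 le_rfl) (Set.mem_Ici.2 h) h
    simp at this
    have : 0 ≤ |s| ^ 3 / 2 := by positivity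
    linarith
  · have hsum := hasSum_pow_div_log_of_abs_lt_one (x := -s) (by rw [abs_lt]; constructor <;> linarith)
    have h2 := sum_le_hasSum (Finset.range 2) (fun i _ => by
      have : 0 ≤ -s := by linarith
      positivity) hsum
    simp only [Finset.sum_range_succ, Finset.sum_range_zero, sub_neg_eq_add] at h2
    norm_num at h2
    rw [abs_of_nonpos h]
    have h3 : log (1 + s) ≤ s - s ^ 2 / 2 := by linarith
    nlinarith [mul_le_mul_of_nonneg_left h3 (by linarith : 0 ≤ 1 + s)]

theorem logBregman_le_taylor {m u : ℝ} (hm : 0 < m) (hu : 0 < u) :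
    logBregman m u ≤ (u - m) ^ 2 / (2 * m) + |u - m| ^ 3 / (2 * m ^ 2) := by
  have h := one_add_mul_log_one_add_le (s := (u - m) / m) (by
    rw [lt_div_iff₀ hm]; linarith)
  have h1 : 1 + (u - m) / m = u / m := by field_simp; ring
  rw [h1, log_div hu.ne' hm.ne', abs_div, abs_of_pos hm] at h
  have h2 := mul_le_mul_of_nonneg_left h hm.le
  have h3 : m * (u / m * (log u - log m)) = u * (log u - log m) := by field_simp
  have h4 : m * ((u - m) / m + ((u - m) / m) ^ 2 / 2 + (|u - m| / m) ^ 3 / 2) =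
    u - m + (u - m) ^ 2 / (2 * m) + |u - m| ^ 3 / (2 * m ^ 2) := by field_simp
  unfold logBregman
  linarith

theorem logBregman_integral_le {α : Type*} [MeasurableSpace α] {μ : Measure α}
    [IsProbabilityMeasure μ] {m u : α → ℝ} (hm : ∀ x, 0 < m x) (hu : ∀ x, 0 < u x)
    (him : Integrable m μ) (hiu : Integrable u μ)
    (hi : Integrable (fun x => logBregman (m x) (u x)) μ) :
    logBregman (∫ x, m x ∂μ) (∫ x, u x ∂μ) ≤ ∫ x, logBregman (m x) (u x) ∂μ := by
  have pos {g : α → ℝ} (hg : ∀ x, 0 < g x) (hi : Integrable g μ) : 0 < ∫ x, g x ∂μ := by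
    rw [integral_pos_iff_support_of_nonneg (fun x => (hg x).le) hi]
    have : Function.support g = Set.univ := Set.eq_univ_of_forall fun x => (hg x).ne'
    simp [this]
  have hM := pos hm him
  have hU := pos hu hiu
  set M := ∫ x, m x ∂μ
  set U := ∫ x, u x ∂μ
  have hpt (x : α) : u x * (log U - log M) - m x * (U / M - 1) ≤ logBregman (m x) (u x) := by
    have h := logBregman_nonneg (mul_pos (hm x) (div_pos hU hM)) (hu x)
    unfold logBregman at h ⊢
    rw [log_mul (hm x).ne' (div_pos hU hM).ne', log_div hU.ne' hM.ne'] at h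
    linarith
  have h := integral_mono ((hiu.mul_const _).sub (him.mul_const _)) hi hpt
  simp only [Pi.sub_apply] at h
  rw [integral_sub (hiu.mul_const _) (him.mul_const _), integral_mul_const, integral_mul_const] at h
  refine le_trans (le_of_eq ?_) h
  have : M * (U / M - 1) = U - M := by field_simp
  change _ = U * _ - M * _
  rw [this, logBregman]
  ring
theorem logBregman_mem_Icc {a b m u : ℝ} (ha : 0 < a) (hm : m ∈ Set.Icc a b)
    (hu : u ∈ Set.Icc a b) : logBregman m u ∈ Set.Icc 0 ((b - a) ^ 2 / a) := by
  have hm0 := ha.trans_le hm.1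
  have hu0 := ha.trans_le hu.1
  refine ⟨logBregman_nonneg hm0 hu0, (logBregman_le_sq_div hm0 hu0).trans ?_⟩
  refine div_le_div₀ (sq_nonneg _) (sq_le_sq' ?_ ?_) ha hm.1 <;> linarith [hm.1, hm.2, hu.1, hu.2]

theorem abs_logBregman_le {a b m u : ℝ} (ha : 0 < a) (hm : m ∈ Set.Icc a b)
    (hu : u ∈ Set.Icc a b) : |logBregman m u| ≤ (b - a) ^ 2 / a := by
  have h := logBregman_mem_Icc ha hm hu
  rw [abs_of_nonneg h.1]
  exact h.2

theorem continuous_logBregman {X : Type*} [TopologicalSpace X] {m u : X → ℝ} (hm : Continuous m)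
    (hu : Continuous u) (hm0 : ∀ x, 0 < m x) (hu0 : ∀ x, 0 < u x) :
    Continuous fun x => logBregman (m x) (u x) :=
  ((hu.mul ((hu.log fun x => (hu0 x).ne').sub (hm.log fun x => (hm0 x).ne'))).sub hu).add hm

theorem abs_mul_log_le {a b u : ℝ} (ha : 0 < a) (hu : u ∈ Set.Icc a b) :
    |u * log u| ≤ b * max |log a| |log b| := by
  have hu0 := ha.trans_le hu.1
  rw [abs_mul, abs_of_pos hu0]
  exact mul_le_mul hu.2 (abs_le_max_abs_abs (log_le_log ha hu.1) (log_le_log hu0 hu.2))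
    (abs_nonneg _) (hu0.le.trans hu.2)

theorem integrable_of_continuous_of_abs_le {X : Type*} [TopologicalSpace X]
    [SecondCountableTopology X] [MeasurableSpace X] [OpensMeasurableSpace X]
    {μ : Measure X} [IsFiniteMeasure μ] {f : X → ℝ}
    (hf : Continuous f) {M : ℝ} (hM : ∀ x, |f x| ≤ M) : Integrable f μ :=
  Integrable.of_bound hf.aestronglyMeasurable M (Eventually.of_forall hM)

/-- Difference quotients with moving base point converge to the strict derivative. -/
theorem HasStrictFDerivAt.tendsto_inv_mul_sub {E : Type*} [NormedAddCommGroup E]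
    [NormedSpace ℝ E] {g : E → ℝ} {L : E →L[ℝ] ℝ} {x : E}
    (hg : HasStrictFDerivAt g L x) {c : ℕ → ℝ} (hc : Tendsto c atTop (𝓝 0)) (hc0 : ∀ k, c k ≠ 0)
    {p : ℕ → E} (hp : Tendsto p atTop (𝓝 x)) (w : E) :
    Tendsto (fun k => (c k)⁻¹ * (g (p k + c k • w) - g (p k))) atTop (𝓝 (L w)) := by
  have hcw : Tendsto (fun k => c k • w) atTop (𝓝 0) := by simpa using hc.smul_const w
  have hq : Tendsto (fun k => (p k + c k • w, p k)) atTop (𝓝 (x, x)) := by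
    simpa [nhds_prod_eq] using (hp.add hcw).prodMk hp
  have ho := hg.isLittleO.comp_tendsto hq
  have hO : (fun k => c k • w) =O[atTop] c :=
    Asymptotics.IsBigO.of_bound ‖w‖ (Eventually.of_forall fun k => by
      rw [norm_smul, mul_comm])
  have ho2 : (fun k => g (p k + c k • w) - g (p k) - L (c k • w)) =o[atTop] c := by
    refine Asymptotics.IsLittleO.trans_isBigO ?_ hO
    simpa [Function.comp_def] using ho
  have h := ho2.tendsto_div_nhds_zero.add_const (L w)
  rw [zero_add] at h
  refine h.congr fun k => ?_
  rw [map_smul, smul_eq_mul]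
  field_simp [hc0 k]
  ring

section
variable {E : Type*} [NormedAddCommGroup E] [InnerProductSpace ℝ E] [FiniteDimensional ℝ E]
  [MeasurableSpace E] [BorelSpace E]

theorem stdGaussian_map_smul_conv {r s : ℝ} (hr : 0 ≤ r) (hs : 0 ≤ s) :
    ((stdGaussian E).map (√r • ·)) ∗ ((stdGaussian E).map (√s • ·)) =
      (stdGaussian E).map (√(r + s) • ·) := by
  have (r : ℝ) : IsProbabilityMeasure ((stdGaussian E).map (√r • ·)) :=
    Measure.isProbabilityMeasure_map (by fun_prop)
  refine Measure.ext_of_charFun ?_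
  ext t
  rw [charFun_conv]
  simp only [charFun_map_smul, charFun_stdGaussian, norm_smul, ← Complex.exp_add]
  congr 1
  have : (√(r + s)) ^ 2 = √ r ^ 2 + √ s ^ 2 := by
    rw [sq_sqrt hr, sq_sqrt hs, sq_sqrt (by positivity)]
  simp only [norm_of_nonneg (sqrt_nonneg _), ← Complex.ofReal_pow, mul_pow, this]
  push_cast
  ring

theorem integral_sq_stdGaussian (L : StrongDual ℝ E) :
    ∫ y, (L y) ^ 2 ∂(stdGaussian E) = ‖L‖ ^ 2 := by
  rw [← variance_dual_stdGaussian L, variance_of_integral_eq_zero (by fun_prop) (by simp)]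


/-- The Gaussian heat semigroup, normalized so that time `r` adds a Gaussian of variance `r`. -/
noncomputable def gaussianHeat (r : ℝ) (f : E → ℝ) (z : E) : ℝ :=
  ∫ y, f (z + √r • y) ∂(stdGaussian E)

theorem integrable_gaussianHeat {f : E → ℝ} (hf : Continuous f) {M : ℝ} (hM : ∀ x, |f x| ≤ M)
    (r : ℝ) (z : E) : Integrable (fun y => f (z + √r • y)) (stdGaussian E) :=
  integrable_of_continuous_of_abs_le (by fun_prop) fun _ => hM _

theorem continuous_gaussianHeat {f : E → ℝ} (hf : Continuous f) {M : ℝ} (hM : ∀ x, |f x| ≤ M)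
    (r : ℝ) : Continuous (gaussianHeat r f) :=
  continuous_of_dominated (bound := fun _ => M)
    (fun z => (integrable_gaussianHeat hf hM r z).aestronglyMeasurable)
    (fun _ => Eventually.of_forall fun _ => hM _) (integrable_const _)
    (Eventually.of_forall fun _ => by fun_prop)

theorem gaussianHeat_mono {f g : E → ℝ} (hf : Continuous f) {M : ℝ} (hM : ∀ x, |f x| ≤ M)
    (hg : Continuous g) {K : ℝ} (hK : ∀ x, |g x| ≤ K) (hfg : ∀ x, f x ≤ g x) (r : ℝ) (z : E) :
    gaussianHeat r f z ≤ gaussianHeat r g z :=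
  integral_mono (integrable_gaussianHeat hf hM r z) (integrable_gaussianHeat hg hK r z)
    fun _ => hfg _

theorem gaussianHeat_mem_Icc {f : E → ℝ} (hf : Continuous f) {a b : ℝ}
    (hab : ∀ x, f x ∈ Set.Icc a b) (r : ℝ) (z : E) : gaussianHeat r f z ∈ Set.Icc a b := by
  have hi := integrable_gaussianHeat hf
    (fun x => abs_le_max_abs_abs (hab x).1 (hab x).2) r z
  constructor
  · have := integral_mono (integrable_const a) hi fun y => (hab (z + √r • y)).1
    simpa [gaussianHeat] using this
  · have := integral_mono hi (integrable_const b) fun y => (hab (z + √r • y)).2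
    simpa [gaussianHeat] using this

theorem abs_gaussianHeat_le {f : E → ℝ} (hf : Continuous f) {M : ℝ} (hM : ∀ x, |f x| ≤ M)
    (r : ℝ) (z : E) : |gaussianHeat r f z| ≤ M :=
  abs_le.2 (gaussianHeat_mem_Icc hf (fun x => abs_le.1 (hM x)) r z)

theorem gaussianHeat_gaussianHeat {f : E → ℝ} (hf : Continuous f) {M : ℝ} (hM : ∀ x, |f x| ≤ M)
    {r s : ℝ} (hr : 0 ≤ r) (hs : 0 ≤ s) (z : E) :
    gaussianHeat r (gaussianHeat s f) z = gaussianHeat (r + s) f z := by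
  have (r : ℝ) : IsProbabilityMeasure ((stdGaussian E).map (√r • ·)) :=
    Measure.isProbabilityMeasure_map (by fun_prop)
  have key (r : ℝ) {g : E → ℝ} (hg : Continuous g) (x : E) :
      ∫ y, g (x + y) ∂((stdGaussian E).map (√r • ·)) = gaussianHeat r g x :=
    integral_map (by fun_prop) (Continuous.aestronglyMeasurable (by fun_prop))
  rw [← key _ (continuous_gaussianHeat hf hM s), ← key _ hf, ← stdGaussian_map_smul_conv hr hs,
    integral_conv (integrable_of_continuous_of_abs_le (by fun_prop) fun _ => hM _)]
  simp only [← key _ hf, add_assoc]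

/-- Over one time step the entropy is bounded by the mean Bregman divergence from the
starting value. -/
theorem gaussianHeat_entropy_le {f : E → ℝ} (hf : Continuous f) {a b : ℝ} (ha : 0 < a)
    (hab : ∀ x, f x ∈ Set.Icc a b) (h : ℝ) (z : E) :
    gaussianHeat h (fun x => f x * log (f x)) z - gaussianHeat h f z * log (gaussianHeat h f z) ≤
      ∫ w, logBregman (f z) (f (z + √h • w)) ∂(stdGaussian E) := by
  have hpos (x : E) : 0 < f x := ha.trans_le (hab x).1
  have hi := integrable_gaussianHeat hf
    (fun x => abs_le_max_abs_abs (hab x).1 (hab x).2) h z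
  have hil := integrable_gaussianHeat (f := fun x => f x * log (f x))
    (hf.mul (hf.log fun x => (hpos x).ne')) (fun x => abs_mul_log_le ha (hab x)) h z
  have hU := logBregman_nonneg (hpos z) (ha.trans_le (gaussianHeat_mem_Icc hf hab h z).1)
  have heq : ∫ w, logBregman (f z) (f (z + √h • w)) ∂(stdGaussian E) =
      gaussianHeat h (fun x => f x * log (f x)) z - gaussianHeat h f z * log (f z)
        - gaussianHeat h f z + f z := by
    simp only [logBregman, mul_sub]
    have hi1 : Integrable (fun w => f (z + √h • w) * log (f (z + √h • w)) -
        f (z + √h • w) * log (f z)) (stdGaussian E) := hil.sub (hi.mul_const _)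
    have hi2 : Integrable (fun w => f (z + √h • w) * log (f (z + √h • w)) -
        f (z + √h • w) * log (f z) - f (z + √h • w)) (stdGaussian E) := hi1.sub hi
    rw [integral_add hi2 (integrable_const _), integral_sub hi1 hi,
      integral_sub hil (hi.mul_const _), integral_mul_const]
    simp [gaussianHeat]
  rw [heq]
  unfold logBregman at hU
  linarith

theorem gaussianHeat_integral_swap {G : E → E → ℝ} (hG : Continuous (Function.uncurry G)) {M : ℝ}
    (hM : ∀ x w, |G x w| ≤ M) (r : ℝ) (z : E) :
    gaussianHeat r (fun x => ∫ w, G x w ∂(stdGaussian E)) z =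
      ∫ w, gaussianHeat r (fun x => G x w) z ∂(stdGaussian E) := by
  refine integral_integral_swap (f := fun y w => G (z + √r • y) w)
    (integrable_of_continuous_of_abs_le (M := M) ?_ fun p => hM _ _)
  exact hG.comp (f := fun p : E × E => (z + √r • p.1, p.2)) (by fun_prop)

theorem integrable_gaussianHeat_param {G : E → E → ℝ} (hG : Continuous (Function.uncurry G))
    {M : ℝ} (hM : ∀ x w, |G x w| ≤ M) (r : ℝ) (z : E) :
    Integrable (fun w => gaussianHeat r (fun x => G x w) z) (stdGaussian E) := by
  refine integrable_of_continuous_of_abs_le (M := M) ?_ fun w =>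
    abs_gaussianHeat_le (hG.comp (f := fun x : E => (x, w)) (by fun_prop)) (fun x => hM x w) r z
  refine continuous_of_dominated (bound := fun _ => M)
    (fun w => (integrable_gaussianHeat (hG.comp (f := fun x : E => (x, w)) (by fun_prop))
      (fun x => hM x w) r z).aestronglyMeasurable)
    (fun w => Eventually.of_forall fun _ => hM _ _) (integrable_const _)
    (Eventually.of_forall fun y => ?_)
  exact hG.comp (f := fun w : E => (z + √r • y, w)) (by fun_prop)

/-- Subdividing the time interval into `k + 1` steps of length `h` bounds the entropy by `k + 1`
times a mean Bregman divergence over an increment of variance `h`. -/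
theorem gaussianHeat_entropy_le_steps {h : ℝ} (hh : 0 ≤ h) {a b : ℝ} (ha : 0 < a) (k : ℕ) :
    ∀ {f : E → ℝ}, Continuous f → (∀ x, f x ∈ Set.Icc a b) → ∀ z : E,
    gaussianHeat ((k + 1) * h) (fun x => f x * log (f x)) z -
        gaussianHeat ((k + 1) * h) f z * log (gaussianHeat ((k + 1) * h) f z) ≤
      (k + 1) * ∫ w, gaussianHeat (k * h) (fun x => logBregman (f x) (f (x + √h • w))) z
        ∂(stdGaussian E) := by
  induction k with
  | zero =>
    intro f hf hab z
    simpa [gaussianHeat] using gaussianHeat_entropy_le hf ha hab h z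
  | succ k ih =>
    intro f hf hab z
    have hpos (x : E) : 0 < f x := ha.trans_le (hab x).1
    have hfM (x : E) : |f x| ≤ max |a| |b| := abs_le_max_abs_abs (hab x).1 (hab x).2
    have hψ : Continuous fun x => f x * log (f x) := hf.mul (hf.log fun x => (hpos x).ne')
    have hψM (x : E) := abs_mul_log_le ha (hab x)
    set g := gaussianHeat h f with hg_def
    have hg : Continuous g := continuous_gaussianHeat hf hfM h
    have hgab (x : E) : g x ∈ Set.Icc a b := gaussianHeat_mem_Icc hf hab h x
    have hgpos (x : E) : 0 < g x := ha.trans_le (hgab x).1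
    have hψg : Continuous fun x => g x * log (g x) := hg.mul (hg.log fun x => (hgpos x).ne')
    have hψgM (x : E) := abs_mul_log_le ha (hgab x)
    have hB {f : E → ℝ} (hf : Continuous f) (hpos : ∀ x, 0 < f x) :
        Continuous (Function.uncurry fun x w => logBregman (f x) (f (x + √h • w))) :=
      continuous_logBregman (m := fun p : E × E => f p.1) (u := fun p => f (p.1 + √h • p.2))
        (by fun_prop) (by fun_prop) (fun _ => hpos _) fun _ => hpos _
    have hB1 {f : E → ℝ} (hf : Continuous f) (hpos : ∀ x, 0 < f x) (w : E) :
        Continuous (fun x => logBregman (f x) (f (x + √h • w))) :=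
      continuous_logBregman hf (by fun_prop) hpos fun _ => hpos _
    have hBM {f : E → ℝ} (hab : ∀ x, f x ∈ Set.Icc a b) (x w : E) :
        |logBregman (f x) (f (x + √h • w))| ≤ (b - a) ^ 2 / a :=
      abs_logBregman_le ha (hab _) (hab _)
    have hkh : 0 ≤ (k : ℝ) * h := by positivity
    have hkh1 : 0 ≤ ((k : ℝ) + 1) * h := by positivity
    have split {F : E → ℝ} (hF : Continuous F) {M : ℝ} (hM : ∀ x, |F x| ≤ M) :
        gaussianHeat (((k + 1 : ℕ) + 1) * h) F z =
          gaussianHeat ((k + 1) * h) (gaussianHeat h F) z := by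
      rw [gaussianHeat_gaussianHeat hF hM hkh1 hh]
      congr 1
      push_cast
      ring
    have h1 : gaussianHeat ((k + 1) * h) (gaussianHeat h fun x => f x * log (f x)) z -
        gaussianHeat ((k + 1) * h) (fun x => g x * log (g x)) z ≤
        ∫ w, gaussianHeat ((k + 1) * h) (fun x => logBregman (f x) (f (x + √h • w))) z
          ∂(stdGaussian E) := by
      rw [← gaussianHeat_integral_swap (hB hf hpos) (hBM hab)]
      have hc := continuous_gaussianHeat hψ hψM h
      have hcM := abs_gaussianHeat_le hψ hψM h
      have hi1 := integrable_gaussianHeat hc hcM ((k + 1) * h) z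
      have hi2 := integrable_gaussianHeat hψg hψgM ((k + 1) * h) z
      rw [gaussianHeat, gaussianHeat, ← integral_sub hi1 hi2]
      refine integral_mono (hi1.sub hi2) ?_ fun y => gaussianHeat_entropy_le hf ha hab h _
      refine Integrable.integral_prod_left (f := fun p : E × E =>
        logBregman (f (z + √((k + 1) * h) • p.1)) (f (z + √((k + 1) * h) • p.1 + √h • p.2))) ?_
      exact integrable_of_continuous_of_abs_le
        ((hB hf hpos).comp (f := fun p : E × E => (z + √((k + 1) * h) • p.1, p.2)) (by fun_prop))
        fun p => hBM hab _ _
    have h2 : ∫ w, gaussianHeat (k * h) (fun x => logBregman (g x) (g (x + √h • w))) z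
          ∂(stdGaussian E) ≤
        ∫ w, gaussianHeat ((k + 1) * h) (fun x => logBregman (f x) (f (x + √h • w))) z
          ∂(stdGaussian E) := by
      refine integral_mono (integrable_gaussianHeat_param (hB hg hgpos) (hBM hgab) _ z)
        (integrable_gaussianHeat_param (hB hf hpos) (hBM hab) _ z) fun w => ?_
      have hw := hB1 hf hpos w
      have hwM (x : E) := hBM hab x w
      dsimp only
      rw [add_mul, one_mul, ← gaussianHeat_gaussianHeat hw hwM hkh hh]
      refine gaussianHeat_mono (hB1 hg hgpos w) (fun x => hBM hgab x w)
        (continuous_gaussianHeat hw hwM h) (abs_gaussianHeat_le hw hwM h) (fun x => ?_) _ z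
      have hJ := logBregman_integral_le (μ := stdGaussian E) (m := fun y => f (x + √h • y))
        (u := fun y => f (x + √h • w + √h • y)) (fun _ => hpos _) (fun _ => hpos _)
        (integrable_gaussianHeat hf hfM h x) (integrable_gaussianHeat hf hfM h _)
        (by simpa only [add_right_comm] using integrable_gaussianHeat hw hwM h x)
      refine hJ.trans_eq ?_
      simp only [gaussianHeat, add_right_comm]
    have h3 := ih hg hgab z
    rw [split hψ hψM, split hf hfM]
    have h4 := mul_le_mul_of_nonneg_left h2 (by positivity : (0 : ℝ) ≤ k + 1)
    push_cast
    linarith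

/-- The Gaussian logarithmic Sobolev inequality. -/
theorem stdGaussian_logSobolev {g : E → ℝ} (hg : ContDiff ℝ 1 g) {a b : ℝ} (ha : 0 < a)
    (hab : ∀ x, g x ∈ Set.Icc a b) {C : ℝ} (hC : ∀ x, ‖fderiv ℝ g x‖ ≤ C) :
    ∫ x, g x * log (g x) ∂(stdGaussian E) -
        (∫ x, g x ∂(stdGaussian E)) * log (∫ x, g x ∂(stdGaussian E)) ≤
      1 / 2 * ∫ x, ‖fderiv ℝ g x‖ ^ 2 / g x ∂(stdGaussian E) := by
  set γ := stdGaussian E with hγ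
  have hcont : Continuous g := hg.continuous
  have hpos (x : E) : 0 < g x := ha.trans_le (hab x).1
  have hC0 : 0 ≤ C := (norm_nonneg _).trans (hC 0)
  have hlip (x y : E) : |g y - g x| ≤ C * ‖y - x‖ := by
    simpa using convex_univ.norm_image_sub_le_of_norm_fderiv_le (𝕜 := ℝ)
      (fun z _ => (hg.differentiable one_ne_zero).differentiableAt) (fun z _ => hC z)
      (Set.mem_univ x) (Set.mem_univ y)
  let c : ℕ → ℝ := fun k => √(1 / ((k : ℝ) + 1))
  have hcpos (k : ℕ) : 0 < c k := sqrt_pos.2 (by positivity)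
  have hcsq (k : ℕ) : c k ^ 2 = 1 / ((k : ℝ) + 1) := sq_sqrt (by positivity)
  have hclim : Tendsto c atTop (𝓝 0) := by
    simpa [c] using (tendsto_one_div_add_atTop_nhds_zero_nat (𝕜 := ℝ)).sqrt
  let r : ℕ → ℝ := fun k => √(k * (1 / ((k : ℝ) + 1)))
  have hrlim : Tendsto r atTop (𝓝 1) := by
    have := (tendsto_natCast_div_add_atTop (1 : ℝ)).sqrt
    simpa [r, div_eq_mul_inv] using this
  let δ : ℕ → E × E → ℝ := fun k p => g (r k • p.2 + c k • p.1) - g (r k • p.2)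
  let d : ℕ → E × E → ℝ := fun k p => (c k)⁻¹ * δ k p
  let F : ℕ → E × E → ℝ := fun k p =>
    d k p ^ 2 / (2 * g (r k • p.2)) + d k p ^ 2 * |δ k p| / (2 * g (r k • p.2) ^ 2)
  have hδc (k : ℕ) : Continuous (δ k) := by fun_prop
  have hdc (k : ℕ) : Continuous (d k) := by fun_prop
  have hFc (k : ℕ) : Continuous (F k) := by
    refine Continuous.add (Continuous.div (by fun_prop) (by fun_prop) fun p => ?_)
      (Continuous.div (by fun_prop) (by fun_prop) fun p => ?_)
    · have := hpos (r k • p.2); positivity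
    · have := hpos (r k • p.2); positivity
  have hd (k : ℕ) (p : E × E) : d k p ^ 2 ≤ C ^ 2 * ‖p.1‖ ^ 2 := by
    have h := hlip (r k • p.2) (r k • p.2 + c k • p.1)
    rw [add_sub_cancel_left, norm_smul, norm_of_nonneg (hcpos k).le] at h
    rw [← mul_pow, ← sq_abs]
    refine pow_le_pow_left₀ (abs_nonneg _) ?_ 2
    rw [abs_mul, abs_of_pos (inv_pos.2 (hcpos k)), inv_mul_le_iff₀ (hcpos k)]
    linarith
  have hδ (k : ℕ) (p : E × E) : |δ k p| ≤ b - a := by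
    have h1 := hab (r k • p.2 + c k • p.1)
    have h2 := hab (r k • p.2)
    rw [abs_le]
    constructor <;> linarith [h1.1, h1.2, h2.1, h2.2]
  let bound : E × E → ℝ := fun p =>
    (C ^ 2 * ‖p.1‖ ^ 2) / (2 * a) + C ^ 2 * ‖p.1‖ ^ 2 * (b - a) / (2 * a ^ 2)
  have hsq : Integrable (fun p : E × E => ‖p.1‖ ^ 2) (γ.prod γ) :=
    Integrable.comp_fst (f := fun y : E => ‖y‖ ^ 2)
      ((IsGaussian.memLp_id γ 2 (by simp)).integrable_norm_pow two_ne_zero) γ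
  have hbound : Integrable bound (γ.prod γ) :=
    ((hsq.const_mul _).div_const _).add (((hsq.const_mul _).mul_const _).div_const _)
  have hF0 (k : ℕ) (p : E × E) : 0 ≤ F k p := by
    have := hpos (r k • p.2)
    positivity
  have hFb (k : ℕ) (p : E × E) : F k p ≤ bound p := by
    have h1 := (hab (r k • p.2)).1
    have h2 := hd k p
    have h3 := hδ k p
    have h4 : 0 ≤ b - a := (abs_nonneg _).trans h3
    simp only [F, bound]
    gcongr
  have hFint (k : ℕ) : Integrable (F k) (γ.prod γ) :=
    hbound.mono' (hFc k).aestronglyMeasurable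
      (Eventually.of_forall fun p => by rw [norm_of_nonneg (hF0 k p)]; exact hFb k p)
  have hstep (k : ℕ) : ∫ x, g x * log (g x) ∂γ - (∫ x, g x ∂γ) * log (∫ x, g x ∂γ) ≤
      ∫ p, F k p ∂(γ.prod γ) := by
    have hk : (0 : ℝ) < k + 1 := by positivity
    have h := gaussianHeat_entropy_le_steps (h := 1 / ((k : ℝ) + 1)) (by positivity) ha k hcont hab
      (0 : E)
    rw [mul_one_div_cancel hk.ne'] at h
    simp only [gaussianHeat, sqrt_one, one_smul, zero_add] at h
    refine h.trans ?_
    have hi : Integrable (fun p : E × E => logBregman (g (r k • p.2)) (g (r k • p.2 + c k • p.1)))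
        (γ.prod γ) :=
      integrable_of_continuous_of_abs_le (continuous_logBregman (by fun_prop) (by fun_prop)
        (fun _ => hpos _) fun _ => hpos _) fun p => abs_logBregman_le ha (hab _) (hab _)
    rw [← integral_prod _ hi, ← integral_const_mul]
    refine integral_mono (hi.const_mul _) (hFint k) fun p => ?_
    have ht := mul_le_mul_of_nonneg_left
      (logBregman_le_taylor (hpos (r k • p.2)) (hpos (r k • p.2 + c k • p.1))) hk.le
    refine ht.trans_eq ?_
    have hd2 : d k p ^ 2 = ((k : ℝ) + 1) * δ k p ^ 2 := by
      simp only [d, mul_pow, inv_pow, hcsq]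
      simp
    simp only [F, hd2]
    rw [← sq_abs (δ k p)]
    simp only [δ]
    ring
  have hlim : Tendsto (fun k => ∫ p, F k p ∂(γ.prod γ)) atTop
      (𝓝 (∫ p : E × E, (fderiv ℝ g p.2 p.1) ^ 2 / (2 * g p.2) ∂(γ.prod γ))) := by
    refine tendsto_integral_of_dominated_convergence bound
      (fun k => (hFc k).aestronglyMeasurable) hbound
      (fun k => Eventually.of_forall fun p => by rw [norm_of_nonneg (hF0 k p)]; exact hFb k p)
      (Eventually.of_forall fun p => ?_)
    have hp : Tendsto (fun k => r k • p.2) atTop (𝓝 p.2) := by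
      simpa using hrlim.smul_const p.2
    have hgp : Tendsto (fun k => g (r k • p.2)) atTop (𝓝 (g p.2)) := (hcont.tendsto _).comp hp
    have hdlim : Tendsto (fun k => d k p) atTop (𝓝 (fderiv ℝ g p.2 p.1)) :=
      (hg.contDiffAt.hasStrictFDerivAt one_ne_zero).tendsto_inv_mul_sub hclim
        (fun k => (hcpos k).ne') hp p.1
    have hδlim : Tendsto (fun k => δ k p) atTop (𝓝 0) := by
      have := hclim.mul hdlim
      rw [zero_mul] at this
      refine this.congr fun k => ?_
      simp only [d]
      rw [mul_inv_cancel_left₀ (hcpos k).ne']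
    have hgpos := hpos p.2
    have := ((hdlim.pow 2).div (hgp.const_mul 2) (by positivity)).add
      (((hdlim.pow 2).mul hδlim.abs).div ((hgp.pow 2).const_mul 2) (by positivity))
    simpa using this
  refine (ge_of_tendsto' hlim hstep).trans_eq ?_
  have hfd : Continuous (fderiv ℝ g) := hg.continuous_fderiv one_ne_zero
  have hlint : Integrable (fun p : E × E => (fderiv ℝ g p.2 p.1) ^ 2 / (2 * g p.2))
      (γ.prod γ) := by
    refine ((hsq.const_mul (C ^ 2)).div_const (2 * a)).mono' ?_ (Eventually.of_forall fun p => ?_)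
    · refine Continuous.aestronglyMeasurable (Continuous.div (by fun_prop) (by fun_prop) fun p => ?_)
      have := hpos p.2
      positivity
    · have h1 := (hab p.2).1
      have h2 := hpos p.2
      have h3 : (fderiv ℝ g p.2 p.1) ^ 2 ≤ C ^ 2 * ‖p.1‖ ^ 2 := by
        rw [← mul_pow, ← sq_abs]
        exact pow_le_pow_left₀ (abs_nonneg _)
          ((fderiv ℝ g p.2).le_of_opNorm_le (hC _) _) 2
      rw [norm_of_nonneg (by positivity)]
      gcongr
  rw [integral_prod_symm _ hlint, ← integral_const_mul]
  refine integral_congr_ae (Eventually.of_forall fun x => ?_)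
  simp only [integral_div, hγ, integral_sq_stdGaussian]
  ring

end

theorem local_logSobolev_OU (n : ℕ) (hn : 1 ≤ n)
    (f : EuclideanSpace ℝ (Fin n) → ℝ) (hf : ContDiff ℝ (⊤ : ℕ∞) f)
    (a b : ℝ) (ha : 0 < a) (hab : ∀ x, a ≤ f x ∧ f x ≤ b)
    (C : ℝ) (hgrad : ∀ x, ‖gradient f x‖ ≤ C)
    (t : ℝ) (ht : 0 ≤ t) (x : EuclideanSpace ℝ (Fin n)) :
    OU n t (fun y => f y * Real.log (f y)) x - OU n t f x * Real.log (OU n t f x) ≤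
      (1 - Real.exp (-2 * t)) / 2 * OU n t (fun y => ‖gradient f y‖ ^ 2 / f y) x := by
  have hnorm (y : EuclideanSpace ℝ (Fin n)) : ‖gradient f y‖ = ‖fderiv ℝ f y‖ := by
    simp [gradient]
  simp only [hnorm] at hgrad ⊢
  set s := √(1 - rexp (-2 * t)) with hs
  have hs2 : s ^ 2 = 1 - rexp (-2 * t) :=
    sq_sqrt (sub_nonneg.2 (exp_le_one_iff.2 (by linarith)))
  have hs0 : 0 ≤ s := sqrt_nonneg _
  set v := rexp (-t) • x
  have hfd (y : EuclideanSpace ℝ (Fin n)) :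
      fderiv ℝ (fun y => f (v + s • y)) y = s • fderiv ℝ f (v + s • y) := by
    have h1 : HasFDerivAt (fun y : EuclideanSpace ℝ (Fin n) => v + s • y)
        (s • ContinuousLinearMap.id ℝ _) y := ((hasFDerivAt_id y).const_smul s).const_add v
    have h2 : HasFDerivAt (fun y => f (v + s • y)) _ y := ((hf.differentiable (by simp)).differentiableAt
      (x := v + s • y)).hasFDerivAt.comp y h1
    rw [h2.fderiv, ContinuousLinearMap.comp_smul, ContinuousLinearMap.comp_id]
  have key := stdGaussian_logSobolev (g := fun y => f (v + s • y))
    ((hf.of_le (by exact_mod_cast le_top)).comp (by fun_prop)) ha (fun _ => hab _) (C := s * C)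
    (fun y => by
      rw [hfd, norm_smul, norm_of_nonneg hs0]
      exact mul_le_mul_of_nonneg_left (hgrad _) hs0)
  simp only [OU, gaussianMeasure_eq_stdGaussian]
  refine key.trans_eq ?_
  simp only [hfd, norm_smul, norm_of_nonneg hs0, mul_pow, mul_div_assoc, integral_const_mul, hs2]
  ring
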